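/- Let K/k be a field extension, 𝒟 a pseudo-tensor category over k, and 𝒟_K its extension of scalars (morphism spaces K ⊗_k 𝒟(−,−), followed by Karoubi completion). If a morphism f : X → Y of 𝒟 becomes split in 𝒟_K, then f is already split in 𝒟. -/

import Mathlib

open CategoryTheory CategoryTheory.Limits CategoryTheory.MonoidalCategory

universe v u

/-- A morphism `f` is split if there is `g` with `f ∘ g ∘ f = f`. -/
def IsSplit {C : Type u} [Category.{v} C] {X Y : C} (f : X ⟶ Y) : Prop :=
  ∃ g : Y ⟶ X, f ≫ g ≫ f = f

/-- The sequence `X₂ ⟶ X₁ ⟶ X₀ ⟶ 0` is exact, i.e. `q` is a cokernel of `p`. -/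
def IsCokernelSeq {C : Type u} [Category.{v} C] [Preadditive C] {X₂ X₁ X₀ : C}
    (p : X₂ ⟶ X₁) (q : X₁ ⟶ X₀) : Prop :=
  p ≫ q = 0 ∧ ∀ ⦃A : C⦄ (h : X₁ ⟶ A), p ≫ h = 0 → ∃! t : X₀ ⟶ A, q ≫ t = h

/-- The sequence `0 ⟶ X₀ ⟶ X₁ ⟶ X₂` is exact, i.e. `i` is a kernel of `p`. -/
def IsKernelSeq {C : Type u} [Category.{v} C] [Preadditive C] {X₀ X₁ X₂ : C}
    (i : X₀ ⟶ X₁) (p : X₁ ⟶ X₂) : Prop :=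
  i ≫ p = 0 ∧ ∀ ⦃A : C⦄ (h : A ⟶ X₁), h ≫ p = 0 → ∃! t : A ⟶ X₀, t ≫ i = h

/-- The morphism `ℰ_X = ev_X ⊗ id_{X⁰⊗X} − id_{X⁰⊗X} ⊗ ev_X`. -/
def calE {C : Type u} [Category.{v} C] [Preadditive C] [MonoidalCategory C]
    (X Xd : C) [ExactPairing X Xd] : (Xd ⊗ X) ⊗ (Xd ⊗ X) ⟶ Xd ⊗ X :=
  (ε_ X Xd ▷ (Xd ⊗ X)) ≫ (λ_ (Xd ⊗ X)).hom -
    ((Xd ⊗ X) ◁ ε_ X Xd) ≫ (ρ_ (Xd ⊗ X)).hom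

/-- `X` (with chosen dual `Xd`) is strongly faithful: `ev_X` is the cokernel of `ℰ_X`. -/
def StronglyFaithful {C : Type u} [Category.{v} C] [Preadditive C]
    [MonoidalCategory C] (X Xd : C) [ExactPairing X Xd] : Prop :=
  IsCokernelSeq (calE X Xd) (ε_ X Xd)

open TensorProduct

/-- Let `K/k` be a field extension and `𝒟` a pseudo-tensor category over
`k`. If `f : X ⟶ Y` becomes split in the scalar extension `𝒟_K` (i.e. there is
`g ∈ K ⊗_k Hom(Y, X)` with `f ∘ g ∘ f = 1 ⊗ f`, where `f ∘ − ∘ f` is extended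
`K`-linearly), then `f` is already split in `𝒟`. -/
theorem stmt16 {k K : Type*} [Field k] [Field K] [Algebra k K]
    {C : Type u} [Category.{v} C] [Preadditive C] [Linear k C] [MonoidalCategory C]
    [SymmetricCategory C] [MonoidalPreadditive C] [MonoidalLinear k C] [RigidCategory C]
    [IsIdempotentComplete C]
    (hEnd : Function.Bijective fun a : k => a • (𝟙 (𝟙_ C)))
    {X Y : C} (f : X ⟶ Y)
    (hsplit : ∃ g : K ⊗[k] (Y ⟶ X),
      TensorProduct.map (LinearMap.id : K →ₗ[k] K)
        ((Linear.rightComp k X f).comp (Linear.leftComp k X f)) g = (1 : K) ⊗ₜ[k] f) :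
    ∃ g₀ : Y ⟶ X, f ≫ g₀ ≫ f = f := by
  obtain ⟨g, hg⟩ := hsplit
  obtain ⟨φ, hφ⟩ := LinearMap.exists_leftInverse_of_injective (Algebra.linearMap k K)
    (LinearMap.ker_eq_bot.mpr (algebraMap k K).injective)
  have h1 : φ 1 = 1 := by simpa using LinearMap.congr_fun hφ 1
  have key : ∀ g : K ⊗[k] (Y ⟶ X),
      TensorProduct.lid k (X ⟶ Y) (TensorProduct.map φ LinearMap.id
        (TensorProduct.map (LinearMap.id : K →ₗ[k] K)
          ((Linear.rightComp k X f).comp (Linear.leftComp k X f)) g)) =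
      f ≫ (TensorProduct.lid k (Y ⟶ X) (TensorProduct.map φ LinearMap.id g)) ≫ f := by
    intro g
    induction g using TensorProduct.induction_on with
    | zero => simp
    | tmul a b => simp
    | add a b ha hb => simp only [map_add, ha, hb, Preadditive.add_comp, Preadditive.comp_add]
  refine ⟨TensorProduct.lid k (Y ⟶ X) (TensorProduct.map φ LinearMap.id g), ?_⟩
  rw [← key, hg]
  simp [h1]
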